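/- Lifting of λσ-reductions to λπ: suppose (Γ ⊢ M) ⟹ U and U λσ-reduces to V in zero or more steps. Then there exists a judgement Σ ⊢ L such that Γ ⊢ M reduces to Σ ⊢ L by zero or more steps of the λπ-judgement reduction ⇝, Σ ⊢ L is a σπα-normal form with respect to ⇝, and (Σ ⊢ L) ⟹ σ(V), where σ(V) is the σ-normal form of V. -/

import Mathlib

/- Named terms and substitutions of the λπ-calculus. Variables are natural numbers. -/
mutual
inductive Tm : Type
  | var : ℕ → Tm
  | app : Tm → Tm → Tm
  | lam : ℕ → Tm → Tm
  | clos : Subst → Tm → Tm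
inductive Subst : Type
  | id : Subst
  | pi : ℕ → Subst
  | cons : Subst → Tm → ℕ → Subst
  | comp : Subst → Subst → Subst
end

/- Contexts are lists of variables; the head of the list is the *rightmost* variable,
so the context `Γ, a` of the paper is `a :: Γ`. -/
mutual
/-- `WfTm Γ M` is the judgement `Γ ⊢ M`. -/
inductive WfTm : List ℕ → Tm → Prop
  | var (Γ : List ℕ) (a : ℕ) : WfTm (a :: Γ) (.var a)
  | weak {Γ : List ℕ} {a : ℕ} (b : ℕ) : a ≠ b → WfTm Γ (.var a) → WfTm (b :: Γ) (.var a)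
  | app {Γ M N} : WfTm Γ M → WfTm Γ N → WfTm Γ (.app M N)
  | lam {Γ a M} : WfTm (a :: Γ) M → WfTm Γ (.lam a M)
  | clos {Γ s Δ M} : WfSub Γ s Δ → WfTm Δ M → WfTm Γ (.clos s M)
/-- `WfSub Γ s Δ` is the judgement `Γ ⊢ s ▷ Δ`. -/
inductive WfSub : List ℕ → Subst → List ℕ → Prop
  | id (Γ) : WfSub Γ .id Γ
  | pi (Γ a) : WfSub (a :: Γ) (.pi a) Γ
  | cons {Γ s Δ N} (a) : WfSub Γ s Δ → WfTm Γ N → WfSub Γ (.cons s N a) (a :: Δ)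
  | comp {Γ s Δ q Θ} : WfSub Γ s Δ → WfSub Δ q Θ → WfSub Γ (.comp s q) Θ
end

/-- The operator `O_{λa}` on sequences of finite sets (sequences are 0-indexed:
index `n` corresponds to the paper's index `n+1`). -/
def Olam (a : ℕ) (A : ℕ → Finset ℕ) : ℕ → Finset ℕ
  | 0 => (A 0).erase a ∪ A 1
  | n + 1 => A (n + 2)

/-- The operator `O_π`. -/
def Opi (A : ℕ → Finset ℕ) : ℕ → Finset ℕ
  | 0 => ∅
  | n + 1 => A n

mutual
/-- The free-variable sequence of a term: `FV M n` is the paper's `FV_{n+1}(M)`. -/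
def FV : Tm → ℕ → Finset ℕ
  | .var a => fun n => if n = 0 then {a} else ∅
  | .app M N => fun n => FV M n ∪ FV N n
  | .lam a M => Olam a (FV M)
  | .clos s M => Osub s (FV M)
/-- The operator `O_s` associated with a substitution `s`. -/
def Osub : Subst → (ℕ → Finset ℕ) → (ℕ → Finset ℕ)
  | .id => fun A => A
  | .pi _ => fun A => Opi A
  | .cons s N a => fun A n => Osub s (Olam a A) n ∪ FV N n
  | .comp s q => fun A => Osub s (Osub q A)
end

/-- Iterated abstraction `λΓ.M` (recall the head of the list is the rightmost variable). -/
def lamCtx : List ℕ → Tm → Tm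
  | [], M => M
  | a :: Γ, M => lamCtx Γ (.lam a M)

/-- Free variables of a judgement: `FV(Γ ⊢ M) = FV(λΓ.M)`. -/
def FVJ (Γ : List ℕ) (M : Tm) : ℕ → Finset ℕ := FV (lamCtx Γ M)

/-- Iterated lifting `⇑_Δ(s)`. -/
def Uparrow : List ℕ → Subst → Subst
  | [], s => s
  | a :: Δ, s => .cons (.comp (.pi a) (Uparrow Δ s)) (.var a) a

/- One-step reduction of the λπ-calculus (compatible closure).  The Boolean
parameter tells whether the rule `Beta` is allowed: `StepTm true` is λπ-reduction,
`StepTm false` is σπα-reduction. -/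
mutual
inductive StepTm : Bool → Tm → Tm → Prop
  | beta {a : ℕ} {M N : Tm} :
      StepTm true (.app (.lam a M) N) (.clos (.cons .id N a) M)
  | abs {β : Bool} {s : Subst} {a : ℕ} {M : Tm} :
      StepTm β (.clos s (.lam a M))
        (.lam a (.clos (.cons (.comp (.pi a) s) (.var a) a) M))
  | app {β : Bool} {s : Subst} {M N : Tm} :
      StepTm β (.clos s (.app M N)) (.app (.clos s M) (.clos s N))
  | consVar {β : Bool} {s : Subst} {N : Tm} {a : ℕ} :
      StepTm β (.clos (.cons s N a) (.var a)) N
  | new {β : Bool} {s : Subst} {N : Tm} {a b : ℕ} : a ≠ b →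
      StepTm β (.clos (.cons s N a) (.var b)) (.clos s (.var b))
  | idVar {β : Bool} {a : ℕ} : StepTm β (.clos .id (.var a)) (.var a)
  | clos {β : Bool} {s q : Subst} {M : Tm} :
      StepTm β (.clos s (.clos q M)) (.clos (.comp s q) M)
  | pi1 {β : Bool} {a b : ℕ} : a ≠ b → StepTm β (.clos (.pi a) (.var b)) (.var b)
  | pi2 {β : Bool} {s : Subst} {a b : ℕ} : a ≠ b →
      StepTm β (.clos (.comp s (.pi a)) (.var b)) (.clos s (.var b))
  | alpha1 {β : Bool} {a b : ℕ} {M : Tm} :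
      (∃ i, a ∈ FV (.lam a M) i) → (∀ i, b ∉ FV (.lam a M) i) →
      StepTm β (.lam a M) (.lam b (.clos (.cons (.pi b) (.var b) a) M))
  | lamCong {β : Bool} {a : ℕ} {M₁ M₂ : Tm} :
      StepTm β M₁ M₂ → StepTm β (.lam a M₁) (.lam a M₂)
  | appL {β : Bool} {M₁ M₂ N : Tm} : StepTm β M₁ M₂ → StepTm β (.app M₁ N) (.app M₂ N)
  | appR {β : Bool} {M N₁ N₂ : Tm} : StepTm β N₁ N₂ → StepTm β (.app M N₁) (.app M N₂)
  | closL {β : Bool} {s₁ s₂ : Subst} {M : Tm} :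
      StepSub β s₁ s₂ → StepTm β (.clos s₁ M) (.clos s₂ M)
  | closR {β : Bool} {s : Subst} {M₁ M₂ : Tm} :
      StepTm β M₁ M₂ → StepTm β (.clos s M₁) (.clos s M₂)
inductive StepSub : Bool → Subst → Subst → Prop
  | ass {β : Bool} {s q r : Subst} :
      StepSub β (.comp s (.comp q r)) (.comp (.comp s q) r)
  | idR {β : Bool} {s : Subst} : StepSub β (.comp s .id) s
  | idShift {β : Bool} {a : ℕ} : StepSub β (.comp .id (.pi a)) (.pi a)
  | consShift {β : Bool} {s : Subst} {N : Tm} {a : ℕ} :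
      StepSub β (.comp (.cons s N a) (.pi a)) s
  | map {β : Bool} {s q : Subst} {N : Tm} {a : ℕ} :
      StepSub β (.comp s (.cons q N a)) (.cons (.comp s q) (.clos s N) a)
  | consL {β : Bool} {s₁ s₂ : Subst} {N : Tm} {a : ℕ} :
      StepSub β s₁ s₂ → StepSub β (.cons s₁ N a) (.cons s₂ N a)
  | consR {β : Bool} {s : Subst} {N₁ N₂ : Tm} {a : ℕ} :
      StepTm β N₁ N₂ → StepSub β (.cons s N₁ a) (.cons s N₂ a)
  | compL {β : Bool} {s₁ s₂ q : Subst} :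
      StepSub β s₁ s₂ → StepSub β (.comp s₁ q) (.comp s₂ q)
  | compR {β : Bool} {s q₁ q₂ : Subst} :
      StepSub β q₁ q₂ → StepSub β (.comp s q₁) (.comp s q₂)
end

/-- One-step reduction `⇝` on judgements `Γ ⊢ M`, including the rule `α₂`.
`StepJ true` is λπ, `StepJ false` is σπα. -/
inductive StepJ (β : Bool) : List ℕ × Tm → List ℕ × Tm → Prop
  | step {Γ : List ℕ} {M₁ M₂ : Tm} : StepTm β M₁ M₂ → StepJ β (Γ, M₁) (Γ, M₂)
  | alpha2 {Γ Δ : List ℕ} {a b : ℕ} {M : Tm} :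
      (∃ i, a ∈ FVJ (Δ ++ [a]) M i) → (∀ i, b ∉ FVJ (Δ ++ [a]) M i) →
      StepJ β (Δ ++ a :: Γ, M)
        (Δ ++ b :: Γ, .clos (Uparrow Δ (.cons (.pi b) (.var b) a)) M)

/- Name-free (de Bruijn) terms and substitutions. -/
mutual
inductive NTm : Type
  | one : NTm
  | app : NTm → NTm → NTm
  | lam : NTm → NTm
  | clos : NSub → NTm → NTm
inductive NSub : Type
  | id : NSub
  | pi : NSub
  | cons : NSub → NTm → NSub
  | comp : NSub → NSub → NSub
end

/-- `piIter n` is the left-nested composition of `n+1` copies of `π`. -/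
def piIter : ℕ → NSub
  | 0 => .pi
  | k + 1 => .comp (piIter k) .pi

/-- `dbr n` is the de Bruijn index `n+1̲`: `dbr 0 = 1` and
`dbr (n+1) = ((…(π∘π)∘…)∘π)∘1` with `n+1` occurrences of `π`. -/
def dbr : ℕ → NTm
  | 0 => .one
  | n + 1 => .clos (piIter n) .one

/- One-step reduction of λσ (`NStepTm true`) resp. σ (`NStepTm false`)
on name-free terms/substitutions. -/
mutual
inductive NStepTm : Bool → NTm → NTm → Prop
  | beta {U V : NTm} : NStepTm true (.app (.lam U) V) (.clos (.cons .id V) U)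
  | abs {β : Bool} {u : NSub} {U : NTm} :
      NStepTm β (.clos u (.lam U)) (.lam (.clos (.cons (.comp .pi u) .one) U))
  | app {β : Bool} {u : NSub} {U V : NTm} :
      NStepTm β (.clos u (.app U V)) (.app (.clos u U) (.clos u V))
  | consVar {β : Bool} {u : NSub} {V : NTm} : NStepTm β (.clos (.cons u V) .one) V
  | idVar {β : Bool} : NStepTm β (.clos .id .one) .one
  | clos {β : Bool} {u v : NSub} {U : NTm} :
      NStepTm β (.clos u (.clos v U)) (.clos (.comp u v) U)
  | lamCong {β : Bool} {U₁ U₂ : NTm} : NStepTm β U₁ U₂ → NStepTm β (.lam U₁) (.lam U₂)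
  | appL {β : Bool} {U₁ U₂ V : NTm} : NStepTm β U₁ U₂ → NStepTm β (.app U₁ V) (.app U₂ V)
  | appR {β : Bool} {U V₁ V₂ : NTm} : NStepTm β V₁ V₂ → NStepTm β (.app U V₁) (.app U V₂)
  | closL {β : Bool} {u₁ u₂ : NSub} {U : NTm} :
      NStepSub β u₁ u₂ → NStepTm β (.clos u₁ U) (.clos u₂ U)
  | closR {β : Bool} {u : NSub} {U₁ U₂ : NTm} :
      NStepTm β U₁ U₂ → NStepTm β (.clos u U₁) (.clos u U₂)
inductive NStepSub : Bool → NSub → NSub → Prop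
  | ass {β : Bool} {u v w : NSub} : NStepSub β (.comp u (.comp v w)) (.comp (.comp u v) w)
  | idR {β : Bool} {u : NSub} : NStepSub β (.comp u .id) u
  | idShift {β : Bool} : NStepSub β (.comp .id .pi) .pi
  | consShift {β : Bool} {u : NSub} {V : NTm} : NStepSub β (.comp (.cons u V) .pi) u
  | map {β : Bool} {u v : NSub} {V : NTm} :
      NStepSub β (.comp u (.cons v V)) (.cons (.comp u v) (.clos u V))
  | consL {β : Bool} {u₁ u₂ : NSub} {V : NTm} :
      NStepSub β u₁ u₂ → NStepSub β (.cons u₁ V) (.cons u₂ V)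
  | consR {β : Bool} {u : NSub} {V₁ V₂ : NTm} :
      NStepTm β V₁ V₂ → NStepSub β (.cons u V₁) (.cons u V₂)
  | compL {β : Bool} {u₁ u₂ v : NSub} :
      NStepSub β u₁ u₂ → NStepSub β (.comp u₁ v) (.comp u₂ v)
  | compR {β : Bool} {u v₁ v₂ : NSub} :
      NStepSub β v₁ v₂ → NStepSub β (.comp u v₁) (.comp u v₂)
end

/- The correspondence `(Γ ⊢ M) ⟹ U` resp. `(Γ ⊢ s ▷ Δ) ⟹ u` between judgements and
name-free terms/substitutions (Definition 7.6 of the paper). -/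
mutual
inductive TrTm : List ℕ → Tm → NTm → Prop
  | var (Γ : List ℕ) (a : ℕ) : TrTm (a :: Γ) (.var a) (dbr 0)
  | weak {Γ : List ℕ} {a : ℕ} {n : ℕ} (b : ℕ) : a ≠ b →
      TrTm Γ (.var a) (dbr n) → TrTm (b :: Γ) (.var a) (dbr (n + 1))
  | app {Γ M N U V} : TrTm Γ M U → TrTm Γ N V → TrTm Γ (.app M N) (.app U V)
  | lam {Γ a M U} : TrTm (a :: Γ) M U → TrTm Γ (.lam a M) (.lam U)
  | clos {Γ s Δ M u U} : TrSub Γ s Δ u → TrTm Δ M U → TrTm Γ (.clos s M) (.clos u U)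
inductive TrSub : List ℕ → Subst → List ℕ → NSub → Prop
  | id (Γ) : TrSub Γ .id Γ .id
  | pi (Γ a) : TrSub (a :: Γ) (.pi a) Γ .pi
  | cons {Γ s Δ N u V} (a) : TrSub Γ s Δ u → TrTm Γ N V →
      TrSub Γ (.cons s N a) (a :: Δ) (.cons u V)
  | comp {Γ s Δ q Θ u v} : TrSub Γ s Δ u → TrSub Δ q Θ v →
      TrSub Γ (.comp s q) Θ (.comp u v)
end

/-!
Name-free terms are interpreted as pure de Bruijn terms, substitutions being executed.  Under this
interpretation σ-steps become identities and `Beta` becomes β-reduction, and the σ-normal form of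
`V` is the pure term `V` denotes.  On the named side, `Γ ⊢ M` first reduces to a judgement whose
only closures are stuck variables `π^k∘b`; such a closure is stuck because `b` is shadowed, and
`α₁`, `α₂` rename the shadowing binders to fresh variables.  So every judgement reduces to a pure
one representing the same de Bruijn term.  A β-step of that term is a `Beta` step of the pure
judgement, and iterating follows the whole λσ-reduction.
-/

open Relation

/-! ### Pure de Bruijn terms -/

/-- Pure λ-terms with de Bruijn indices, counted from `0`. -/
inductive DeBruijn : Type
  | var : ℕ → DeBruijn
  | app : DeBruijn → DeBruijn → DeBruijn
  | lam : DeBruijn → DeBruijn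

namespace DeBruijn

/-- The sequence `a, f 0, f 1, …`; used to extend parallel substitutions and renamings. -/
def scons {α : Type*} (a : α) (f : ℕ → α) : ℕ → α
  | 0 => a
  | n + 1 => f n

/-- Capture-avoiding renaming of the free indices. -/
def rename (ξ : ℕ → ℕ) : DeBruijn → DeBruijn
  | var n => var (ξ n)
  | app T S => app (rename ξ T) (rename ξ S)
  | lam T => lam (rename (scons 0 (Nat.succ ∘ ξ)) T)

/-- The parallel substitution `θ` lifted under one binder. -/
def up (θ : ℕ → DeBruijn) : ℕ → DeBruijn :=
  scons (var 0) (rename Nat.succ ∘ θ)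

/-- Capture-avoiding parallel substitution. -/
def subst (θ : ℕ → DeBruijn) : DeBruijn → DeBruijn
  | var n => θ n
  | app T S => app (subst θ T) (subst θ S)
  | lam T => lam (subst (up θ) T)

theorem comp_scons {α γ : Type*} (g : α → γ) (a : α) (f : ℕ → α) :
    g ∘ scons a f = scons (g a) (g ∘ f) := by
  funext n; cases n <;> rfl

theorem up_var : up var = var := by
  funext n; cases n <;> rfl

theorem up_var_comp (ξ : ℕ → ℕ) : up (var ∘ ξ) = var ∘ scons 0 (Nat.succ ∘ ξ) := by
  funext n; cases n <;> rfl

theorem subst_var (T : DeBruijn) : T.subst var = T := by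
  induction T with
  | var n => rfl
  | app T S ihT ihS => rw [subst, ihT, ihS]
  | lam T ih => rw [subst, up_var, ih]

theorem subst_var_comp (ξ : ℕ → ℕ) (T : DeBruijn) : T.subst (var ∘ ξ) = T.rename ξ := by
  induction T generalizing ξ with
  | var n => rfl
  | app T S ihT ihS => rw [subst, rename, ihT, ihS]
  | lam T ih => rw [subst, rename, up_var_comp, ih]

theorem subst_rename (ξ : ℕ → ℕ) (θ : ℕ → DeBruijn) (T : DeBruijn) :
    (T.rename ξ).subst θ = T.subst (θ ∘ ξ) := by
  induction T generalizing ξ θ with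
  | var n => rfl
  | app T S ihT ihS => simp only [subst, rename, ihT, ihS]
  | lam T ih =>
    have hup : up θ ∘ scons 0 (Nat.succ ∘ ξ) = up (θ ∘ ξ) := by
      rw [comp_scons]; rfl
    rw [rename, subst, subst, ih, hup]

theorem rename_rename (ξ ζ : ℕ → ℕ) (T : DeBruijn) :
    (T.rename ξ).rename ζ = T.rename (ζ ∘ ξ) := by
  rw [← subst_var_comp ζ, subst_rename, Function.comp_assoc, subst_var_comp]

theorem rename_id (T : DeBruijn) : T.rename id = T :=
  (subst_var_comp id T).symm.trans (subst_var T)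

theorem rename_subst (ξ : ℕ → ℕ) (θ : ℕ → DeBruijn) (T : DeBruijn) :
    (T.subst θ).rename ξ = T.subst (rename ξ ∘ θ) := by
  induction T generalizing ξ θ with
  | var n => rfl
  | app T S ihT ihS => simp only [subst, rename, ihT, ihS]
  | lam T ih =>
    have hup : rename (scons 0 (Nat.succ ∘ ξ)) ∘ up θ = up (rename ξ ∘ θ) := by
      rw [up, comp_scons]
      congr 1
      funext n
      simp only [Function.comp_apply, rename_rename]
      rfl
    rw [subst, rename, subst, ih, hup]

theorem subst_comp_up (θ η : ℕ → DeBruijn) : subst (up η) ∘ up θ = up (subst η ∘ θ) := by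
  rw [up.eq_def θ, comp_scons]
  congr 1
  funext n
  simp only [Function.comp_apply, subst_rename, rename_subst]
  rfl

theorem subst_subst (θ η : ℕ → DeBruijn) (T : DeBruijn) :
    (T.subst θ).subst η = T.subst (subst η ∘ θ) := by
  induction T generalizing θ η with
  | var n => rfl
  | app T S ihT ihS => simp only [subst, ihT, ihS]
  | lam T ih => rw [subst, subst, subst, ih, subst_comp_up]

/-- `T.IsFree q` says that the index `q` occurs free in `T`. -/
def IsFree : DeBruijn → ℕ → Prop
  | var n, q => q = n
  | app T S, q => IsFree T q ∨ IsFree S q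
  | lam T, q => IsFree T (q + 1)

/-- One-step β-reduction. -/
inductive BetaStep : DeBruijn → DeBruijn → Prop
  | beta {T S} : BetaStep (.app (.lam T) S) (T.subst (scons S var))
  | lam {T T'} : BetaStep T T' → BetaStep (.lam T) (.lam T')
  | appL {T T' S} : BetaStep T T' → BetaStep (.app T S) (.app T' S)
  | appR {T S S'} : BetaStep S S' → BetaStep (.app T S) (.app T S')

/-- β-reduction in zero or more steps. -/
abbrev BetaReduces : DeBruijn → DeBruijn → Prop := ReflTransGen BetaStep

section Beta

variable {T T' S S' : DeBruijn}

theorem BetaReduces.lam (h : BetaReduces T T') : BetaReduces (.lam T) (.lam T') :=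
  h.lift DeBruijn.lam fun _ _ => BetaStep.lam

theorem BetaReduces.app (hT : BetaReduces T T') (hS : BetaReduces S S') :
    BetaReduces (.app T S) (.app T' S') :=
  (hT.lift (DeBruijn.app · S) fun _ _ => BetaStep.appL).trans
    (hS.lift (DeBruijn.app T') fun _ _ => BetaStep.appR)

theorem subst_subst_scons (θ : ℕ → DeBruijn) (T S : DeBruijn) :
    (T.subst (scons S var)).subst θ = (T.subst (up θ)).subst (scons (S.subst θ) var) := by
  rw [subst_subst, subst_subst, comp_scons, up, comp_scons]
  congr 2
  funext n
  simp only [Function.comp_apply, subst_rename]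
  exact (subst_var _).symm

theorem BetaStep.subst (h : BetaStep T T') (θ : ℕ → DeBruijn) :
    BetaStep (T.subst θ) (T'.subst θ) := by
  induction h generalizing θ with
  | beta => rw [subst_subst_scons]; exact .beta
  | lam _ ih => exact .lam (ih _)
  | appL _ ih => exact .appL (ih _)
  | appR _ ih => exact .appR (ih _)

theorem BetaReduces.subst (h : BetaReduces T T') (θ : ℕ → DeBruijn) :
    BetaReduces (T.subst θ) (T'.subst θ) :=
  h.lift (DeBruijn.subst θ) fun _ _ (hs : BetaStep _ _) => hs.subst θ

theorem BetaReduces.rename (h : BetaReduces T T') (ξ : ℕ → ℕ) :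
    BetaReduces (T.rename ξ) (T'.rename ξ) := by
  simpa only [subst_var_comp] using h.subst (var ∘ ξ)

theorem BetaReduces.subst_congr (T : DeBruijn) {θ θ' : ℕ → DeBruijn}
    (h : ∀ n, BetaReduces (θ n) (θ' n)) : BetaReduces (T.subst θ) (T.subst θ') := by
  induction T generalizing θ θ' with
  | var n => exact h n
  | app T S ihT ihS => exact (ihT h).app (ihS h)
  | lam T ih =>
    refine (ih fun n => ?_).lam
    cases n with
    | zero => exact .refl
    | succ n => exact (h n).rename _

end Beta

end DeBruijn

open DeBruijn

/-! ### Interpretation of name-free terms -/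

mutual
/-- The pure term obtained from a name-free term by executing all substitutions. -/
def NTm.denote : NTm → DeBruijn
  | .one => .var 0
  | .app U V => .app U.denote V.denote
  | .lam U => .lam U.denote
  | .clos u U => U.denote.subst u.denote
/-- The parallel substitution denoted by a name-free substitution. -/
def NSub.denote : NSub → ℕ → DeBruijn
  | .id => var
  | .pi => var ∘ Nat.succ
  | .cons u V => scons V.denote u.denote
  | .comp u v => DeBruijn.subst u.denote ∘ v.denote
end

theorem denote_piIter (k : ℕ) : (piIter k).denote = var ∘ (· + (k + 1)) := by
  induction k with
  | zero => rfl
  | succ k ih =>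
    funext n
    simp only [piIter, NSub.denote, Function.comp_apply, DeBruijn.subst, ih]
    congr 1
    omega

theorem denote_dbr (n : ℕ) : (dbr n).denote = .var n := by
  cases n with
  | zero => rfl
  | succ n => simp [dbr, NTm.denote, DeBruijn.subst, denote_piIter]

mutual
theorem NStepTm.denote {β : Bool} {U V : NTm} :
    NStepTm β U V → BetaReduces U.denote V.denote
  | .beta => .single .beta
  | .abs (u := u) => by
    have hup : up u.denote = scons (var 0) (DeBruijn.subst (var ∘ Nat.succ) ∘ u.denote) :=
      congrArg (scons _) (funext fun _ => (subst_var_comp _ _).symm)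
    simp only [NTm.denote, NSub.denote, DeBruijn.subst, hup]
    exact .refl
  | .app | .consVar | .idVar => .refl
  | .clos => by simp only [NTm.denote, NSub.denote, subst_subst]; exact .refl
  | .lamCong h => h.denote.lam
  | .appL h => h.denote.app .refl
  | .appR h => .app .refl h.denote
  | .closL h => .subst_congr _ h.denote
  | .closR h => h.denote.subst _
theorem NStepSub.denote {β : Bool} {u v : NSub} :
    NStepSub β u v → ∀ n, BetaReduces (u.denote n) (v.denote n)
  | .ass, n => by
    simp only [NSub.denote, Function.comp_apply, subst_subst]
    exact .refl
  | .idR, _ | .idShift, _ | .consShift, _ => .refl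
  | .map, n => by cases n <;> exact .refl
  | .consL h, n => by
    cases n with
    | zero => exact .refl
    | succ n => exact h.denote n
  | .consR h, n => by
    cases n with
    | zero => exact h.denote
    | succ n => exact .refl
  | .compL h, _ => .subst_congr _ h.denote
  | .compR h, n => (h.denote n).subst _
end

theorem betaReduces_denote {β : Bool} {U V : NTm} (h : ReflTransGen (NStepTm β) U V) :
    BetaReduces U.denote V.denote :=
  h.lift' NTm.denote fun _ _ => NStepTm.denote

/-- The name-free term, without closures other than de Bruijn indices, that spells out a pure
term.  These are the σ-normal forms. -/
def DeBruijn.toNTm : DeBruijn → NTm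
  | .var n => dbr n
  | .app T S => .app T.toNTm S.toNTm
  | .lam T => .lam T.toNTm

theorem denote_toNTm (T : DeBruijn) : T.toNTm.denote = T := by
  induction T with
  | var n => exact denote_dbr n
  | app T S ihT ihS => rw [toNTm, NTm.denote, ihT, ihS]
  | lam T ih => rw [toNTm, NTm.denote, ih]

theorem not_nstepSub_piIter (k : ℕ) (w : NSub) : ¬ NStepSub false (piIter k) w := by
  induction k generalizing w with
  | zero => rintro ⟨⟩
  | succ k ih =>
    intro h
    generalize hu : piIter k = u at h ih
    rw [piIter, hu] at h
    cases h with
    | idShift => cases k <;> cases hu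
    | consShift => cases k <;> cases hu
    | compL h => exact ih _ h
    | compR h => cases h

theorem not_nstepTm_dbr (n : ℕ) (W : NTm) : ¬ NStepTm false (dbr n) W := by
  cases n with
  | zero => rintro ⟨⟩
  | succ n =>
    intro h
    generalize hu : piIter n = u at h
    rw [dbr, hu] at h
    cases h with
    | consVar => cases n <;> cases hu
    | idVar => cases n <;> cases hu
    | closL h => exact not_nstepSub_piIter n _ (hu ▸ h)
    | closR h => cases h

theorem not_nstepTm_toNTm (T : DeBruijn) (W : NTm) : ¬ NStepTm false T.toNTm W := by
  induction T generalizing W with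
  | var n => exact not_nstepTm_dbr n W
  | app T S ihT ihS =>
    intro h
    rw [toNTm] at h
    cases h with
    | appL h => exact ihT _ h
    | appR h => exact ihS _ h
  | lam T ih =>
    rintro ⟨⟩
    exact ih _ ‹_›

/-! ### Normalization of name-free terms -/

/-- Name-free reduction of terms in zero or more steps. -/
abbrev NReducesTm (β : Bool) : NTm → NTm → Prop := ReflTransGen (NStepTm β)

/-- Name-free reduction of substitutions in zero or more steps. -/
abbrev NReducesSub (β : Bool) : NSub → NSub → Prop := ReflTransGen (NStepSub β)

section NameFree

variable {β : Bool} {U U' V V' : NTm} {u u' v v' : NSub} {T : DeBruijn} {θ η : ℕ → DeBruijn}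

theorem NReducesTm.lam (h : NReducesTm β U U') : NReducesTm β (.lam U) (.lam U') :=
  h.lift NTm.lam fun _ _ => NStepTm.lamCong

theorem NReducesTm.app (hU : NReducesTm β U U') (hV : NReducesTm β V V') :
    NReducesTm β (.app U V) (.app U' V') :=
  (hU.lift (NTm.app · V) fun _ _ => NStepTm.appL).trans
    (hV.lift (NTm.app U') fun _ _ => NStepTm.appR)

theorem NReducesTm.clos (hu : NReducesSub β u u') (hU : NReducesTm β U U') :
    NReducesTm β (.clos u U) (.clos u' U') :=
  (hu.lift (NTm.clos · U) fun _ _ => NStepTm.closL).trans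
    (hU.lift (NTm.clos u') fun _ _ => NStepTm.closR)

theorem NReducesSub.cons (hu : NReducesSub β u u') (hV : NReducesTm β V V') :
    NReducesSub β (.cons u V) (.cons u' V') :=
  (hu.lift (NSub.cons · V) fun _ _ => NStepSub.consL).trans
    (hV.lift (NSub.cons u') fun _ _ => NStepSub.consR)

theorem NReducesSub.comp (hu : NReducesSub β u u') (hv : NReducesSub β v v') :
    NReducesSub β (.comp u v) (.comp u' v') :=
  (hu.lift (NSub.comp · v) fun _ _ => NStepSub.compL).trans
    (hv.lift (NSub.comp u') fun _ _ => NStepSub.compR)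

/-- The power `π^k`, where `π^0` is `id`. -/
def NSub.shiftBy : ℕ → NSub
  | 0 => .id
  | k + 1 => piIter k

/-- `NValSub u θ`: `u` is a normal substitution `⟨…⟨π^k, V₁⟩…, Vₘ⟩`, and it denotes `θ`. -/
inductive NValSub : NSub → (ℕ → DeBruijn) → Prop
  | shift (k : ℕ) : NValSub (.shiftBy k) (var ∘ (· + k))
  | cons {u : NSub} {θ : ℕ → DeBruijn} (T : DeBruijn) :
      NValSub u θ → NValSub (.cons u T.toNTm) (scons T θ)

/-- `u` reduces to a normal substitution denoting `θ`. -/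
def NEvalSub (β : Bool) (u : NSub) (θ : ℕ → DeBruijn) : Prop :=
  ∃ u', NReducesSub β u u' ∧ NValSub u' θ

theorem NEvalSub.of_reduces (hr : NReducesSub β u u') (h : NEvalSub β u' θ) :
    NEvalSub β u θ :=
  let ⟨w, hw, hv⟩ := h
  ⟨w, hr.trans hw, hv⟩

theorem NEvalSub.shift (k : ℕ) : NEvalSub β (.shiftBy k) (var ∘ (· + k)) :=
  ⟨_, .refl, .shift k⟩

theorem NEvalSub.cons (h : NEvalSub β u θ) (hV : NReducesTm β V T.toNTm) :
    NEvalSub β (.cons u V) (scons T θ) :=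
  let ⟨_, hr, hv⟩ := h
  ⟨_, hr.cons hV, hv.cons T⟩

theorem nreducesSub_shiftBy_comp_pi (k : ℕ) :
    NReducesSub β (.comp (.shiftBy k) .pi) (.shiftBy (k + 1)) := by
  cases k with
  | zero => exact .single .idShift
  | succ k => exact .refl

theorem nreducesTm_shiftBy_one (k : ℕ) : NReducesTm β (.clos (.shiftBy k) .one) (dbr k) := by
  cases k with
  | zero => exact .single .idVar
  | succ k => exact .refl

theorem comp_add_comp_succ {α : Type*} (θ : ℕ → α) (k : ℕ) :
    (θ ∘ (· + k)) ∘ Nat.succ = θ ∘ (· + (k + 1)) :=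
  funext fun n => congrArg θ (Nat.succ_add_eq_add_succ n k)

theorem NEvalSub.comp_pi (h : NEvalSub β u θ) : NEvalSub β (.comp u .pi) (θ ∘ Nat.succ) := by
  obtain ⟨u', hr, hv⟩ := h
  refine .of_reduces (hr.comp .refl) ?_
  cases hv with
  | shift k =>
    rw [comp_add_comp_succ]
    exact .of_reduces (nreducesSub_shiftBy_comp_pi k) (.shift (k + 1))
  | cons T hv => exact ⟨_, .single .consShift, hv⟩

theorem NEvalSub.comp_shiftBy (h : NEvalSub β u θ) :
    ∀ k, NEvalSub β (.comp u (.shiftBy k)) (θ ∘ (· + k))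
  | 0 => .of_reduces (.single .idR) h
  | 1 => h.comp_pi
  | k + 2 => by
    rw [← comp_add_comp_succ]
    exact .of_reduces (.single .ass) (h.comp_shiftBy (k + 1)).comp_pi

theorem NEvalSub.clos_one (h : NEvalSub β u θ) : NReducesTm β (.clos u .one) (θ 0).toNTm := by
  obtain ⟨u', hr, hv⟩ := h
  refine (NReducesTm.clos hr .refl).trans ?_
  cases hv with
  | shift k => rw [Function.comp_apply, zero_add]; exact nreducesTm_shiftBy_one k
  | cons => exact .single .consVar

theorem NEvalSub.clos_dbr (h : NEvalSub β u θ) (n : ℕ) :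
    NReducesTm β (.clos u (dbr n)) (θ n).toNTm := by
  cases n with
  | zero => exact h.clos_one
  | succ n =>
    have := (h.comp_shiftBy (n + 1)).clos_one
    rw [Function.comp_apply, zero_add] at this
    exact .head .clos this

/-- `π` can be pushed into the normal form of `T`. -/
def NWeakens (β : Bool) (T : DeBruijn) : Prop :=
  NReducesTm β (.clos .pi T.toNTm) (T.rename Nat.succ).toNTm

theorem NEvalSub.pi_comp (h : NEvalSub β u θ) (hθ : ∀ n, NWeakens β (θ n)) :
    NEvalSub β (.comp .pi u) (rename Nat.succ ∘ θ) := by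
  obtain ⟨u', hr, hv⟩ := h
  refine .of_reduces (.comp .refl hr) ?_
  clear hr
  induction hv with
  | shift k => exact (NEvalSub.shift 1).comp_shiftBy k
  | cons T _ ih =>
    rw [comp_scons]
    exact .of_reduces (.single .map) ((ih fun n => hθ (n + 1)).cons (hθ 0))

theorem nweakens_var (n : ℕ) : NWeakens β (.var n) :=
  (NEvalSub.shift 1).clos_dbr n

/- The hypothesis on `θ` is stable under lifting.  It is trivial for renamings, which yields
`nweakens`, and then holds for every `θ`. -/
theorem NEvalSub.clos_toNTm (h : NEvalSub β u θ) (hθ : ∀ n ξ, NWeakens β ((θ n).rename ξ)) :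
    NReducesTm β (.clos u T.toNTm) (T.subst θ).toNTm := by
  induction T generalizing u θ with
  | var n => exact h.clos_dbr n
  | app T S ihT ihS => exact .head .app ((ihT h hθ).app (ihS h hθ))
  | lam T ih =>
    have hπ : NEvalSub β (.comp .pi u) (rename Nat.succ ∘ θ) :=
      h.pi_comp fun n => rename_id (θ n) ▸ hθ n id
    refine .head .abs (ih (hπ.cons (T := .var 0) .refl) fun n ξ => ?_).lam
    cases n with
    | zero => exact nweakens_var _
    | succ n =>
      rw [scons, Function.comp_apply, rename_rename]
      exact hθ n _

theorem nweakens (T : DeBruijn) : NWeakens β T := by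
  have h := (NEvalSub.shift (β := β) 1).clos_toNTm (T := T) fun n ξ => nweakens_var _
  rwa [subst_var_comp] at h

theorem NEvalSub.comp (hu : NEvalSub β u θ) (hv : NEvalSub β v η) :
    NEvalSub β (.comp u v) (DeBruijn.subst θ ∘ η) := by
  obtain ⟨v', hr, hv⟩ := hv
  refine .of_reduces (.comp .refl hr) ?_
  clear hr
  induction hv with
  | shift k => exact hu.comp_shiftBy k
  | cons T _ ih =>
    rw [comp_scons]
    exact .of_reduces (.single .map) (ih.cons (hu.clos_toNTm fun _ _ => nweakens _))

end NameFree

mutual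
theorem nreduces_denote {β : Bool} : (U : NTm) → NReducesTm β U U.denote.toNTm
  | .one => .refl
  | .app U V => (nreduces_denote U).app (nreduces_denote V)
  | .lam U => (nreduces_denote U).lam
  | .clos u U => (NReducesTm.clos .refl (nreduces_denote U)).trans
      ((nevalSub_denote u).clos_toNTm fun _ _ => nweakens _)
theorem nevalSub_denote {β : Bool} : (u : NSub) → NEvalSub β u u.denote
  | .id => .shift 0
  | .pi => .shift 1
  | .cons u V => (nevalSub_denote u).cons (nreduces_denote V)
  | .comp u v => (nevalSub_denote u).comp (nevalSub_denote v)
end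

/-! ### Named terms with stuck variables -/

/-- Reduction of named terms in zero or more steps. -/
abbrev ReducesTm (β : Bool) : Tm → Tm → Prop := ReflTransGen (StepTm β)

/-- Reduction of named substitutions in zero or more steps. -/
abbrev ReducesSub (β : Bool) : Subst → Subst → Prop := ReflTransGen (StepSub β)

/-- Reduction of judgements in zero or more steps. -/
abbrev ReducesJ (β : Bool) : List ℕ × Tm → List ℕ × Tm → Prop := ReflTransGen (StepJ β)

section Congruences

variable {β : Bool} {M M' N N' : Tm} {s s' q q' : Subst}

theorem ReducesTm.lam (a : ℕ) (h : ReducesTm β M M') : ReducesTm β (.lam a M) (.lam a M') :=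
  h.lift (Tm.lam a) fun _ _ => StepTm.lamCong

theorem ReducesTm.app (hM : ReducesTm β M M') (hN : ReducesTm β N N') :
    ReducesTm β (.app M N) (.app M' N') :=
  (hM.lift (Tm.app · N) fun _ _ => StepTm.appL).trans
    (hN.lift (Tm.app M') fun _ _ => StepTm.appR)

theorem ReducesTm.clos (hs : ReducesSub β s s') (hM : ReducesTm β M M') :
    ReducesTm β (.clos s M) (.clos s' M') :=
  (hs.lift (Tm.clos · M) fun _ _ => StepTm.closL).trans
    (hM.lift (Tm.clos s') fun _ _ => StepTm.closR)

theorem ReducesSub.cons (a : ℕ) (hs : ReducesSub β s s') (hN : ReducesTm β N N') :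
    ReducesSub β (.cons s N a) (.cons s' N' a) :=
  (hs.lift (Subst.cons · N a) fun _ _ => StepSub.consL).trans
    (hN.lift (Subst.cons s' · a) fun _ _ => StepSub.consR)

theorem ReducesSub.comp (hs : ReducesSub β s s') (hq : ReducesSub β q q') :
    ReducesSub β (.comp s q) (.comp s' q') :=
  (hs.lift (Subst.comp · q) fun _ _ => StepSub.compL).trans
    (hq.lift (Subst.comp s') fun _ _ => StepSub.compR)

theorem ReducesTm.toJ (Γ : List ℕ) (h : ReducesTm β M M') : ReducesJ β (Γ, M) (Γ, M') :=
  h.lift (Γ, ·) fun _ _ => StepJ.step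

end Congruences

/-- `Lookup Γ b m`: the de Bruijn index of `b` in `Γ` is `m`, i.e. the first (innermost)
occurrence of `b` is at position `m`. -/
inductive Lookup : List ℕ → ℕ → ℕ → Prop
  | zero (Γ : List ℕ) (b : ℕ) : Lookup (b :: Γ) b 0
  | succ {Γ : List ℕ} {a b m : ℕ} : a ≠ b → Lookup Γ b m → Lookup (a :: Γ) b (m + 1)

/-- `ShiftSub Γ p Δ k`: `p` is `id` or a left-nested composition of `k` shifts `π_a`, and removes
the `k` innermost variables of `Γ`, leaving `Δ`. -/
inductive ShiftSub : List ℕ → Subst → List ℕ → ℕ → Prop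
  | id (Γ : List ℕ) : ShiftSub Γ .id Γ 0
  | pi (Γ : List ℕ) (a : ℕ) : ShiftSub (a :: Γ) (.pi a) Γ 1
  | comp {Γ : List ℕ} {p : Subst} {a : ℕ} {Δ : List ℕ} {k : ℕ} :
      ShiftSub Γ p (a :: Δ) k → ShiftSub Γ (.comp p (.pi a)) Δ (k + 1)

/-- `ValTm Γ M T`: the only closures in `Γ ⊢ M` are shifted variables `p∘b`, and `M` represents
the de Bruijn term `T`. -/
inductive ValTm : List ℕ → Tm → DeBruijn → Prop
  | var {Γ : List ℕ} {b m : ℕ} : Lookup Γ b m → ValTm Γ (.var b) (.var m)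
  | shift {Γ Δ : List ℕ} {p : Subst} {b k m : ℕ} : ShiftSub Γ p Δ k → Lookup Δ b m →
      ValTm Γ (.clos p (.var b)) (.var (m + k))
  | app {Γ : List ℕ} {M N : Tm} {T S : DeBruijn} : ValTm Γ M T → ValTm Γ N S →
      ValTm Γ (.app M N) (.app T S)
  | lam {Γ : List ℕ} {a : ℕ} {M : Tm} {T : DeBruijn} : ValTm (a :: Γ) M T →
      ValTm Γ (.lam a M) (.lam T)

/-- `ValSub Γ s Δ θ`: `s` is a shift extended by terms in the sense of `ValTm`, with
`Γ ⊢ s ▷ Δ`, and represents the parallel substitution `θ`. -/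
inductive ValSub : List ℕ → Subst → List ℕ → (ℕ → DeBruijn) → Prop
  | shift {Γ Δ : List ℕ} {p : Subst} {k : ℕ} : ShiftSub Γ p Δ k →
      ValSub Γ p Δ (var ∘ (· + k))
  | cons {Γ Δ : List ℕ} {s : Subst} {θ : ℕ → DeBruijn} {N : Tm} {T : DeBruijn} (a : ℕ) :
      ValSub Γ s Δ θ → ValTm Γ N T → ValSub Γ (.cons s N a) (a :: Δ) (scons T θ)

/-- `M` reduces to a term whose only closures are shifted variables and which represents `T`. -/
def EvalTm (β : Bool) (Γ : List ℕ) (M : Tm) (T : DeBruijn) : Prop :=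
  ∃ M', ReducesTm β M M' ∧ ValTm Γ M' T

/-- `s` reduces to a shift extended by terms, representing `θ`. -/
def EvalSub (β : Bool) (Γ : List ℕ) (s : Subst) (Δ : List ℕ) (θ : ℕ → DeBruijn) : Prop :=
  ∃ s', ReducesSub β s s' ∧ ValSub Γ s' Δ θ

section Named

variable {β : Bool} {Γ Γ' Δ Θ : List ℕ} {M M' N : Tm} {p s s' q : Subst} {T S : DeBruijn}
  {θ η : ℕ → DeBruijn} {a b k n : ℕ}

theorem EvalTm.of_reduces (hr : ReducesTm β M M') (h : EvalTm β Γ M' T) : EvalTm β Γ M T :=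
  let ⟨N, hN, hv⟩ := h
  ⟨N, hr.trans hN, hv⟩

theorem EvalSub.of_reduces (hr : ReducesSub β s s') (h : EvalSub β Γ s' Δ θ) :
    EvalSub β Γ s Δ θ :=
  let ⟨q, hq, hv⟩ := h
  ⟨q, hr.trans hq, hv⟩

theorem ValTm.eval (h : ValTm Γ M T) : EvalTm β Γ M T :=
  ⟨M, .refl, h⟩

theorem ShiftSub.eval (h : ShiftSub Γ p Δ k) : EvalSub β Γ p Δ (var ∘ (· + k)) :=
  ⟨p, .refl, .shift h⟩

theorem EvalTm.app (hM : EvalTm β Γ M T) (hN : EvalTm β Γ N S) :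
    EvalTm β Γ (.app M N) (.app T S) :=
  let ⟨_, hrM, hvM⟩ := hM
  let ⟨_, hrN, hvN⟩ := hN
  ⟨_, hrM.app hrN, hvM.app hvN⟩

theorem EvalTm.lam (h : EvalTm β (a :: Γ) M T) : EvalTm β Γ (.lam a M) (.lam T) :=
  let ⟨_, hr, hv⟩ := h
  ⟨_, hr.lam a, hv.lam⟩

theorem EvalSub.cons (hs : EvalSub β Γ s Δ θ) (hN : EvalTm β Γ N T) (a : ℕ) :
    EvalSub β Γ (.cons s N a) (a :: Δ) (scons T θ) :=
  let ⟨_, hrs, hvs⟩ := hs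
  let ⟨_, hrN, hvN⟩ := hN
  ⟨_, hrs.cons a hrN, hvs.cons a hvN⟩

theorem EvalSub.comp_pi (h : EvalSub β Γ s (a :: Δ) θ) :
    EvalSub β Γ (.comp s (.pi a)) Δ (θ ∘ Nat.succ) := by
  obtain ⟨s', hr, hv⟩ := h
  refine .of_reduces (hr.comp .refl) ?_
  cases hv with
  | shift hp =>
    rw [comp_add_comp_succ]
    exact hp.comp.eval
  | cons _ hv _ => exact ⟨_, .single .consShift, hv⟩

theorem EvalSub.comp_shift (h : EvalSub β Γ s Γ' θ) (hp : ShiftSub Γ' p Δ k) :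
    EvalSub β Γ (.comp s p) Δ (θ ∘ (· + k)) := by
  induction hp with
  | id => exact .of_reduces (.single .idR) h
  | pi => exact h.comp_pi
  | comp _ ih =>
    rw [← comp_add_comp_succ]
    exact .of_reduces (.single .ass) (ih h).comp_pi

theorem EvalSub.clos_lookup (h : EvalSub β Γ s Δ θ) (hb : Lookup Δ b n) :
    EvalTm β Γ (.clos s (.var b)) (θ n) := by
  obtain ⟨s', hr, hv⟩ := h
  refine .of_reduces (.clos hr .refl) ?_
  clear hr
  induction hv generalizing n with
  | shift hp => exact (ValTm.shift hp hb).eval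
  | cons a _ hN ih =>
    cases hb with
    | zero => exact ⟨_, .single .consVar, hN⟩
    | succ hne hb => exact .of_reduces (.single (.new hne)) (ih hb)

theorem EvalSub.clos_var (h : EvalSub β Γ s Δ θ) (hM : ValTm Δ M (.var n)) :
    EvalTm β Γ (.clos s M) (θ n) := by
  cases hM with
  | var hb => exact h.clos_lookup hb
  | shift hp hb => exact .of_reduces (.single .clos) ((h.comp_shift hp).clos_lookup hb)

/-- Every weakening of a representation of `T` can be evaluated. -/
def Weakens (β : Bool) (T : DeBruijn) : Prop :=
  ∀ (Γ : List ℕ) (a : ℕ) (N : Tm), ValTm Γ N T →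
    EvalTm β (a :: Γ) (.clos (.pi a) N) (T.rename Nat.succ)

theorem weakens_var (n : ℕ) : Weakens β (.var n) :=
  fun Γ a _ hN => (ShiftSub.pi Γ a).eval.clos_var hN

theorem EvalSub.pi_comp (h : EvalSub β Γ s Δ θ) (hθ : ∀ n, Weakens β (θ n)) (a : ℕ) :
    EvalSub β (a :: Γ) (.comp (.pi a) s) Δ (rename Nat.succ ∘ θ) := by
  obtain ⟨s', hr, hv⟩ := h
  refine .of_reduces (.comp .refl hr) ?_
  clear hr
  induction hv with
  | shift hp => exact (ShiftSub.pi _ a).eval.comp_shift hp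
  | cons c _ hN ih =>
    rw [comp_scons]
    exact .of_reduces (.single .map) ((ih fun n => hθ (n + 1)).cons (hθ 0 _ _ _ hN) c)

theorem EvalSub.clos (h : EvalSub β Γ s Δ θ) (hθ : ∀ n ξ, Weakens β ((θ n).rename ξ))
    (hM : ValTm Δ M T) : EvalTm β Γ (.clos s M) (T.subst θ) := by
  induction T generalizing Γ s Δ θ M with
  | var n => exact h.clos_var hM
  | app T S ihT ihS =>
    cases hM with
    | app hM hN => exact .of_reduces (.single .app) ((ihT h hθ hM).app (ihS h hθ hN))
  | lam T ih =>
    cases hM with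
    | @lam _ a _ _ hM =>
    have hπ : EvalSub β (a :: Γ) (.comp (.pi a) s) Δ (rename Nat.succ ∘ θ) :=
      h.pi_comp (fun n => rename_id (θ n) ▸ hθ n id) a
    refine .of_reduces (.single .abs)
      (ih (hπ.cons (ValTm.var (.zero Γ a)).eval a) (fun n ξ => ?_) hM).lam
    cases n with
    | zero => exact weakens_var _
    | succ n =>
      rw [scons, Function.comp_apply, rename_rename]
      exact hθ n _

theorem weakens (T : DeBruijn) : Weakens β T := by
  intro Γ a N hN
  rw [← subst_var_comp]
  exact (ShiftSub.pi Γ a).eval.clos (fun _ _ => weakens_var _) hN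

theorem EvalSub.clos_eval (hs : EvalSub β Γ s Δ θ) (hM : EvalTm β Δ M T) :
    EvalTm β Γ (.clos s M) (T.subst θ) :=
  let ⟨_, hr, hv⟩ := hM
  .of_reduces (.clos .refl hr) (hs.clos (fun _ _ => weakens _) hv)

theorem EvalSub.comp (hs : EvalSub β Γ s Δ θ) (hq : EvalSub β Δ q Θ η) :
    EvalSub β Γ (.comp s q) Θ (DeBruijn.subst θ ∘ η) := by
  obtain ⟨q', hr, hv⟩ := hq
  refine .of_reduces (.comp .refl hr) ?_
  clear hr
  induction hv with
  | shift hp => exact hs.comp_shift hp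
  | cons a _ hN ih =>
    rw [comp_scons]
    exact .of_reduces (.single .map) (ih.cons (hs.clos_eval hN.eval) a)

end Named

theorem TrTm.exists_lookup :
    ∀ {Γ : List ℕ} {a : ℕ} {U : NTm}, TrTm Γ (.var a) U → ∃ n, U.denote = .var n ∧ Lookup Γ a n
  | _, _, _, .var Γ a => ⟨0, rfl, .zero Γ a⟩
  | _, _, _, .weak (n := n) b hne h => by
    obtain ⟨m, hm, hl⟩ := h.exists_lookup
    rw [denote_dbr, DeBruijn.var.injEq] at hm
    exact ⟨n + 1, denote_dbr (n + 1), .succ hne.symm (hm ▸ hl)⟩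

mutual
theorem TrTm.eval {β : Bool} {Γ : List ℕ} {U : NTm} :
    {M : Tm} → TrTm Γ M U → EvalTm β Γ M U.denote
  | .var _, h => by
    obtain ⟨n, hn, hl⟩ := h.exists_lookup
    exact hn ▸ (ValTm.var hl).eval
  | .app _ _, .app hM hN => hM.eval.app hN.eval
  | .lam _ _, .lam hM => hM.eval.lam
  | .clos _ _, .clos hs hM => hs.eval.clos_eval hM.eval
theorem TrSub.eval {β : Bool} {Γ Δ : List ℕ} {u : NSub} :
    {s : Subst} → TrSub Γ s Δ u → EvalSub β Γ s Δ u.denote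
  | .id, .id Γ => (ShiftSub.id Γ).eval
  | .pi _, .pi Γ a => (ShiftSub.pi Γ a).eval
  | .cons _ _ _, .cons a hs hN => hs.eval.cons hN.eval a
  | .comp _ _, .comp hs hq => hs.eval.comp hq.eval
end

/-! ### Free variables -/

section FreeVariables

variable {Γ Δ : List ℕ} {M : Tm} {p : Subst} {T : DeBruijn} {a b i k m q x : ℕ}

theorem Lookup.getElem? (h : Lookup Γ b m) : Γ[m]? = some b := by
  induction h with
  | zero => rfl
  | succ _ _ ih => exact ih

theorem Lookup.mem (h : Lookup Γ b m) : b ∈ Γ :=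
  List.mem_of_getElem? h.getElem?

theorem ShiftSub.drop (h : ShiftSub Γ p Δ k) : Γ.drop k = Δ := by
  induction h with
  | id => rfl
  | pi => rfl
  | comp _ ih => rw [← List.tail_drop, ih, List.tail_cons]

theorem Lookup.eq_of_drop (ha : Lookup Γ a (m + k)) (hb : Lookup (Γ.drop k) b m) : a = b := by
  have := hb.getElem?
  rw [List.getElem?_drop, Nat.add_comm, ha.getElem?] at this
  exact Option.some.inj this

theorem ShiftSub.osub (h : ShiftSub Γ p Δ k) (A : ℕ → Finset ℕ) : Osub p A = Opi^[k] A := by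
  induction h generalizing A with
  | id => rfl
  | pi => rfl
  | comp _ ih => exact ih (Opi A)

theorem mem_iterate_opi {A : ℕ → Finset ℕ} : x ∈ Opi^[k] A i ↔ ∃ m, i = m + k ∧ x ∈ A m := by
  induction k generalizing i with
  | zero => simp
  | succ k ih =>
    rw [Function.iterate_succ_apply']
    cases i with
    | zero => simp [Opi]
    | succ i => simp only [Opi, ih, ← Nat.add_assoc, Nat.add_right_cancel_iff]

theorem mem_FV_var : x ∈ FV (.var b) i ↔ i = 0 ∧ x = b := by
  by_cases hi : i = 0 <;> simp [FV, hi]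

theorem ShiftSub.mem_FV_clos_var (h : ShiftSub Γ p Δ k) :
    x ∈ FV (.clos p (.var b)) i ↔ i = k ∧ x = b := by
  simp only [FV.eq_def (.clos _ _), h.osub, mem_iterate_opi, mem_FV_var]
  constructor
  · rintro ⟨m, rfl, rfl, rfl⟩
    exact ⟨Nat.zero_add k, rfl⟩
  · rintro ⟨rfl, rfl⟩
    exact ⟨0, (Nat.zero_add _).symm, rfl, rfl⟩

theorem mem_FV_lam_zero : x ∈ FV (.lam a M) 0 ↔ (x ≠ a ∧ x ∈ FV M 0) ∨ x ∈ FV M 1 := by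
  simp only [FV, Olam, Finset.mem_union, Finset.mem_erase]

theorem ValTm.mem_drop_of_mem_FV (h : ValTm Γ M T) (hx : x ∈ FV M i) : x ∈ Γ.drop i := by
  induction h generalizing i with
  | var hb =>
    obtain ⟨rfl, rfl⟩ := mem_FV_var.mp hx
    exact hb.mem
  | shift hp hb =>
    obtain ⟨rfl, rfl⟩ := hp.mem_FV_clos_var.mp hx
    exact hp.drop ▸ hb.mem
  | app _ _ ihM ihN => exact (Finset.mem_union.mp hx).elim ihM ihN
  | lam _ ih =>
    cases i with
    | zero =>
      obtain ⟨hne, hx⟩ | hx := mem_FV_lam_zero.mp hx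
      · exact (List.mem_cons.mp (ih hx)).resolve_left hne
      · exact ih hx
    | succ i => exact ih hx

theorem ValTm.mem_of_mem_FV (h : ValTm Γ M T) (hx : x ∈ FV M i) : x ∈ Γ :=
  List.mem_of_mem_drop (h.mem_drop_of_mem_FV hx)

theorem ValTm.exists_mem_FV_of_isFree (h : ValTm Γ M T) (hq : T.IsFree q) :
    ∃ b i m, b ∈ FV M i ∧ q = m + i ∧ Lookup (Γ.drop i) b m := by
  induction h generalizing q with
  | @var _ b m hb => exact ⟨b, 0, m, mem_FV_var.mpr ⟨rfl, rfl⟩, hq, hb⟩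
  | @shift _ _ _ b k m hp hb =>
    exact ⟨b, k, m, hp.mem_FV_clos_var.mpr ⟨rfl, rfl⟩, hq, hp.drop ▸ hb⟩
  | app _ _ ihM ihN =>
    obtain hq | hq := hq
    · obtain ⟨b, i, m, hb, h⟩ := ihM hq
      exact ⟨b, i, m, Finset.mem_union_left _ hb, h⟩
    · obtain ⟨b, i, m, hb, h⟩ := ihN hq
      exact ⟨b, i, m, Finset.mem_union_right _ hb, h⟩
  | lam _ ih =>
    obtain ⟨b, i, m, hb, hm, hl⟩ := ih hq
    match i with
    | 0 =>
      obtain rfl : q + 1 = m := hm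
      cases hl with
      | succ hne hl => exact ⟨b, 0, q, mem_FV_lam_zero.mpr (.inl ⟨hne.symm, hb⟩), rfl, hl⟩
    | 1 => exact ⟨b, 0, m, mem_FV_lam_zero.mpr (.inr hb), Nat.succ.inj hm, hl⟩
    | i + 2 => exact ⟨b, i + 1, m, hb, Nat.succ.inj hm, hl⟩

theorem ValTm.exists_mem_FV_of_lookup (h : ValTm Γ M T) (hq : T.IsFree q) (ha : Lookup Γ a q) :
    ∃ i, a ∈ FV M i := by
  obtain ⟨b, i, m, hb, rfl, hl⟩ := h.exists_mem_FV_of_isFree hq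
  exact ⟨i, ha.eq_of_drop hl ▸ hb⟩

end FreeVariables

/-! ### Renaming shadowing binders -/

/-- `Γ` names every free index of `T` by an unshadowed variable. -/
def Nameable (Γ : List ℕ) (T : DeBruijn) : Prop :=
  ∀ q, T.IsFree q → ∃ b, Lookup Γ b q

/-- `PureTm Γ M T`: the term `M` is closure-free, and `Γ ⊢ M` represents `T`. -/
inductive PureTm : List ℕ → Tm → DeBruijn → Prop
  | var {Γ : List ℕ} {b m : ℕ} : Lookup Γ b m → PureTm Γ (.var b) (.var m)
  | app {Γ : List ℕ} {M N : Tm} {T S : DeBruijn} : PureTm Γ M T → PureTm Γ N S →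
      PureTm Γ (.app M N) (.app T S)
  | lam {Γ : List ℕ} {a : ℕ} {M : Tm} {T : DeBruijn} : PureTm (a :: Γ) M T →
      PureTm Γ (.lam a M) (.lam T)

section Renaming

variable {β : Bool} {Γ Δ : List ℕ} {M : Tm} {p : Subst} {T : DeBruijn} {a b k m : ℕ}

theorem Nameable.cons (hT : Nameable Γ (.lam T))
    (ha : ∀ q, (DeBruijn.lam T).IsFree q → ¬ Lookup Γ a q) : Nameable (a :: Γ) T
  | 0, _ => ⟨a, .zero Γ a⟩
  | q + 1, hq => by
    obtain ⟨b, hb⟩ := hT q hq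
    exact ⟨b, .succ (fun hab => ha q hq (hab ▸ hb)) hb⟩

theorem Nameable.cons_of_notMem (hT : Nameable Γ (.lam T)) (ha : a ∉ Γ) : Nameable (a :: Γ) T :=
  hT.cons fun _ _ h => ha h.mem

theorem ValTm.nameable_cons (h : ValTm Γ (.lam a M) (.lam T)) (hT : Nameable Γ (.lam T))
    (ha : ¬ ∃ i, a ∈ FV (.lam a M) i) : Nameable (a :: Γ) T :=
  hT.cons fun _ hq hl => ha (h.exists_mem_FV_of_lookup hq hl)

theorem exists_notMem_context (Γ : List ℕ) : ∃ b, b ∉ Γ := by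
  simpa only [List.mem_toFinset] using Infinite.exists_notMem_finset Γ.toFinset

theorem EvalSub.rename_head (Γ : List ℕ) (a b : ℕ) :
    EvalSub β (b :: Γ) (.cons (.pi b) (.var b) a) (a :: Γ) var :=
  up_var ▸ (ShiftSub.pi Γ b).eval.cons (ValTm.var (.zero Γ b)).eval a

theorem EvalSub.uparrow {s : Subst} {Θ : List ℕ} (h : EvalSub β Γ s Θ var) (Δ : List ℕ) :
    EvalSub β (Δ ++ Γ) (Uparrow Δ s) (Δ ++ Θ) var := by
  induction Δ with
  | nil => exact h
  | cons c Δ ih =>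
    rw [← up_var]
    exact (ih.pi_comp (fun _ => weakens _) c).cons (ValTm.var (.zero _ c)).eval c

theorem EvalSub.clos_rename {s : Subst} (hs : EvalSub β Γ s Δ var) (h : ValTm Δ M T) :
    EvalTm β Γ (.clos s M) T := by
  rw [← subst_var T]
  exact hs.clos_eval h.eval

theorem ShiftSub.reducesTm_var (h : ShiftSub Γ p Δ k) (hb : Lookup Γ b (m + k)) :
    Lookup Δ b m ∧ ReducesTm β (.clos p (.var b)) (.var b) := by
  induction h generalizing m with
  | id => exact ⟨hb, .single .idVar⟩
  | pi =>
    cases hb with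
    | succ hne hb => exact ⟨hb, .single (.pi1 hne)⟩
  | comp _ ih =>
    obtain ⟨hb', hr⟩ := ih (m := m + 1) (by rwa [Nat.succ_add_eq_add_succ])
    cases hb' with
    | succ hne hb' => exact ⟨hb', .head (.pi2 hne) hr⟩

theorem ValTm.reducesTm_pure (h : ValTm Γ M T) (hT : Nameable Γ T) :
    ∃ L, ReducesTm β M L ∧ PureTm Γ L T := by
  induction T generalizing Γ M with
  | var n =>
    obtain ⟨c, hc⟩ := hT n rfl
    cases h with
    | var hb => exact ⟨_, .refl, .var hb⟩
    | shift hp hb =>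
      obtain rfl := hc.eq_of_drop (hp.drop.symm ▸ hb)
      exact ⟨_, (hp.reducesTm_var hc).2, .var hc⟩
  | app T S ihT ihS =>
    cases h with
    | app hM hN =>
      obtain ⟨L, hrL, hL⟩ := ihT hM fun q hq => hT q (.inl hq)
      obtain ⟨K, hrK, hK⟩ := ihS hN fun q hq => hT q (.inr hq)
      exact ⟨_, hrL.app hrK, hL.app hK⟩
  | lam T ih =>
    cases h with
    | @lam _ a M _ hM =>
    by_cases ha : ∃ i, a ∈ FV (.lam a M) i
    · obtain ⟨b, hb⟩ := exists_notMem_context Γ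
      obtain ⟨M', hr, hM'⟩ := (EvalSub.rename_head (β := β) Γ a b).clos_rename hM
      obtain ⟨L, hrL, hL⟩ := ih hM' (hT.cons_of_notMem hb)
      exact ⟨_, .head (.alpha1 ha fun _ hi => hb (hM.lam.mem_of_mem_FV hi))
        (ReducesTm.lam b (hr.trans hrL)), hL.lam⟩
    · obtain ⟨L, hrL, hL⟩ := ih hM (hM.lam.nameable_cons hT ha)
      exact ⟨_, hrL.lam a, hL.lam⟩

theorem ValTm.iterate_lam (h : ValTm (Δ ++ Γ) M T) :
    ValTm Γ (lamCtx Δ M) (DeBruijn.lam^[Δ.length] T) := by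
  induction Δ generalizing M T with
  | nil => exact h
  | cons _ _ ih => exact ih h.lam

theorem PureTm.iterate_lam (h : PureTm (Δ ++ Γ) M T) :
    PureTm Γ (lamCtx Δ M) (DeBruijn.lam^[Δ.length] T) := by
  induction Δ generalizing M T with
  | nil => exact h
  | cons _ _ ih => exact ih h.lam

theorem lamCtx_append_singleton (Δ : List ℕ) (a : ℕ) (M : Tm) :
    lamCtx (Δ ++ [a]) M = .lam a (lamCtx Δ M) := by
  induction Δ generalizing M with
  | nil => rfl
  | cons _ _ ih => exact ih _

/- `α₂` is `α₁` seen inside `λΔ.M`: binders are treated from the outermost inwards. -/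
theorem ValTm.reducesJ_nameable (h : ValTm (Δ ++ Γ) M T)
    (hT : Nameable Γ (DeBruijn.lam^[Δ.length] T)) :
    ∃ Θ M', ReducesJ β (Δ ++ Γ, M) (Θ, M') ∧ ValTm Θ M' T ∧ Nameable Θ T := by
  induction Δ using List.reverseRecOn generalizing Γ M with
  | nil => exact ⟨Γ, M, .refl, h, hT⟩
  | append_singleton Δ a ih =>
    rw [List.length_append, List.length_singleton, Function.iterate_succ_apply'] at hT
    rw [List.append_assoc, List.singleton_append] at h ⊢
    have hlam := h.iterate_lam.lam
    by_cases ha : ∃ i, a ∈ FV (.lam a (lamCtx Δ M)) i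
    · obtain ⟨b, hb⟩ := exists_notMem_context Γ
      obtain ⟨M', hr, hM'⟩ := ((EvalSub.rename_head (β := β) Γ a b).uparrow Δ).clos_rename h
      obtain ⟨Θ, L, hrL, hL⟩ := ih hM' (hT.cons_of_notMem hb)
      refine ⟨Θ, L, .head (.alpha2 (b := b) ?_ fun i hi => ?_) ((hr.toJ _).trans hrL), hL⟩
      · rwa [FVJ, lamCtx_append_singleton]
      · rw [FVJ, lamCtx_append_singleton] at hi
        exact hb (hlam.mem_of_mem_FV hi)
    · exact ih h (hlam.nameable_cons hT ha)

theorem ValTm.not_isFree_of_nil (h : ValTm [] M T) (q : ℕ) : ¬ T.IsFree q := by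
  intro hq
  obtain ⟨b, i, m, -, -, hl⟩ := h.exists_mem_FV_of_isFree hq
  rw [List.drop_nil] at hl
  cases hl

theorem ValTm.reducesJ_pure (h : ValTm Γ M T) :
    ∃ Θ L, ReducesJ β (Γ, M) (Θ, L) ∧ PureTm Θ L T := by
  rw [← Γ.append_nil] at h ⊢
  have hT : Nameable [] (DeBruijn.lam^[Γ.length] T) :=
    fun q hq => (h.iterate_lam.not_isFree_of_nil q hq).elim
  obtain ⟨Θ, M', hr, hM', hΘ⟩ := h.reducesJ_nameable (β := β) hT
  obtain ⟨L, hrL, hL⟩ := hM'.reducesTm_pure hΘ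
  exact ⟨Θ, L, hr.trans (hrL.toJ Θ), hL⟩

theorem TrTm.reducesJ_pure {U : NTm} (h : TrTm Γ M U) :
    ∃ Θ L, ReducesJ β (Γ, M) (Θ, L) ∧ PureTm Θ L U.denote := by
  obtain ⟨M', hr, hM'⟩ := h.eval (β := β)
  obtain ⟨Θ, L, hrL, hL⟩ := hM'.reducesJ_pure (β := β)
  exact ⟨Θ, L, (hr.toJ Γ).trans hrL, hL⟩

end Renaming

/-! ### Pure judgements -/

section PureJudgements

variable {Γ : List ℕ} {L M N : Tm} {T T' : DeBruijn} {a i x : ℕ}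

theorem Lookup.tr {b m : ℕ} (h : Lookup Γ b m) : TrTm Γ (.var b) (dbr m) := by
  induction h with
  | zero Γ b => exact .var Γ b
  | succ hne _ ih => exact .weak _ hne.symm ih

theorem PureTm.tr (h : PureTm Γ L T) : TrTm Γ L T.toNTm := by
  induction h with
  | var hb => exact hb.tr
  | app _ _ ihM ihN => exact .app ihM ihN
  | lam _ ih => exact .lam ih

theorem PureTm.exists_step_of_betaStep (h : BetaStep T T') (hL : PureTm Γ L T) :
    ∃ L' U', StepTm true L L' ∧ TrTm Γ L' U' ∧ U'.denote = T' := by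
  induction h generalizing Γ L with
  | @beta T S =>
    obtain _ | ⟨_ | _ | hM, hN⟩ := hL
    refine ⟨_, .clos (.cons .id S.toNTm) T.toNTm, .beta, .clos (.cons _ (.id Γ) hN.tr) hM.tr, ?_⟩
    simp only [NTm.denote, NSub.denote, denote_toNTm]
  | lam _ ih =>
    obtain _ | _ | hM := hL
    obtain ⟨L', U', hs, ht, rfl⟩ := ih hM
    exact ⟨_, _, .lamCong hs, .lam ht, rfl⟩
  | appL _ ih =>
    obtain _ | ⟨hM, hN⟩ := hL
    obtain ⟨L', U', hs, ht, rfl⟩ := ih hM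
    exact ⟨_, _, .appL hs, .app ht hN.tr, by rw [NTm.denote, denote_toNTm]⟩
  | appR _ ih =>
    obtain _ | ⟨hM, hN⟩ := hL
    obtain ⟨L', U', hs, ht, rfl⟩ := ih hN
    exact ⟨_, _, .appR hs, .app hM.tr ht, by rw [NTm.denote, denote_toNTm]⟩

theorem TrTm.lift_betaReduces {U : NTm} (hU : TrTm Γ M U) (h : BetaReduces U.denote T) :
    ∃ Θ L, ReducesJ true (Γ, M) (Θ, L) ∧ PureTm Θ L T := by
  induction h with
  | refl => exact hU.reducesJ_pure
  | tail _ hstep ih =>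
    obtain ⟨Θ, L, hr, hL⟩ := ih
    obtain ⟨L', U', hs, hU', rfl⟩ := hL.exists_step_of_betaStep hstep
    obtain ⟨Θ', K, hr', hK⟩ := hU'.reducesJ_pure (β := true)
    exact ⟨Θ', K, hr.trans (.head (.step hs) hr'), hK⟩

theorem PureTm.eq_zero_of_mem_FV (h : PureTm Γ L T) (hx : x ∈ FV L i) : i = 0 := by
  induction h generalizing i with
  | var => exact (mem_FV_var.mp hx).1
  | app _ _ ihM ihN => exact (Finset.mem_union.mp hx).elim ihM ihN
  | lam _ ih =>
    cases i with
    | zero => rfl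
    | succ i => cases ih hx

theorem PureTm.notMem_FV_lam (h : PureTm Γ (.lam a M) T) : a ∉ FV (.lam a M) i := by
  intro ha
  obtain rfl := h.eq_zero_of_mem_FV ha
  obtain ⟨hne, -⟩ | ha := mem_FV_lam_zero.mp ha
  · exact hne rfl
  · cases h with
    | lam hM => cases hM.eq_zero_of_mem_FV ha

theorem PureTm.not_stepTm (h : PureTm Γ L T) : ¬ StepTm false L N := by
  intro hs
  induction h generalizing N with
  | var => cases hs
  | app _ _ ihM ihN =>
    cases hs with
    | appL hs => exact ihM hs
    | appR hs => exact ihN hs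
  | lam hM ih =>
    cases hs with
    | alpha1 ha _ => exact hM.lam.notMem_FV_lam ha.choose_spec
    | lamCong hs => exact ih hs

theorem PureTm.not_stepJ (h : PureTm Γ L T) (p : List ℕ × Tm) : ¬ StepJ false (Γ, L) p := by
  rintro (hs | ⟨⟨i, ha⟩, -⟩)
  · exact h.not_stepTm hs
  · rw [FVJ, lamCtx_append_singleton] at ha
    exact h.iterate_lam.lam.notMem_FV_lam ha

end PureJudgements

/-- lifting of λσ-reductions to λπ: any λσ-reduct of the translation is
tracked by a λπ-reduction of the judgement to a σπα-normal form translating to its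
σ-normal form. -/
theorem lsigma_lifts_to_lpi {Γ : List ℕ} {M : Tm} {U V : NTm}
    (hU : TrTm Γ M U) (hred : Relation.ReflTransGen (NStepTm true) U V) :
    ∃ (Θ : List ℕ) (L : Tm) (V' : NTm),
      Relation.ReflTransGen (NStepTm false) V V' ∧ (∀ W : NTm, ¬ NStepTm false V' W) ∧
      Relation.ReflTransGen (StepJ true) (Γ, M) (Θ, L) ∧
      (∀ p : List ℕ × Tm, ¬ StepJ false (Θ, L) p) ∧
      TrTm Θ L V' := by
  obtain ⟨Θ, L, hlift, hL⟩ := hU.lift_betaReduces (betaReduces_denote hred)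
  exact ⟨Θ, L, V.denote.toNTm, nreduces_denote V, not_nstepTm_toNTm V.denote, hlift,
    hL.not_stepJ, hL.tr⟩
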